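/- arXiv:2211.03181 — 3 statements merged into one kernel-verified Lean document; each statement's English description precedes it below -/
import Mathlib

section
/- Let Σ be a real symmetric p×p matrix, λ₀ ∈ ℝ and u₀ ∈ ℝ^p a unit vector with Σu₀ = λ₀u₀. Let d ∈ ℝ^p and set D = ddᵀ − Σ. Suppose u₁ ∈ ℝ^p and λ₁ ∈ ℝ satisfy D u₀ + Σ u₁ = λ₀ u₁ + λ₁ u₀ and u₀ᵀu₁ = 0. Suppose furthermore that M is a real p×p matrix satisfying M(Σ − λ₀I) = I − u₀u₀ᵀ and M u₀ = 0 (the defining properties of the Moore–Penrose inverse (Σ − λ₀I)⁺ used in the proof). Then u₁ = −(dᵀu₀) M d. In particular, the influence function of the leading eigenvector is IF(z,F) = −((z−μ)ᵀu₀)(Σ−λ₀I)⁺(z−μ) with d = z−μ. -/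
/-!
Since `D u₀ = (dᵀu₀) d - λ₀ u₀`, the first-order equation reads
`(Σ - λ₀ I) u₁ = (λ₀ + λ₁) u₀ - (dᵀu₀) d`. Applying `M` kills the `u₀` term on the right, and on
the left it gives `(I - u₀u₀ᵀ) u₁ = u₁`, because `u₁` is orthogonal to `u₀`.
-/

open Matrix

/-- First-order eigenvector perturbation: with Σu₀ = λ₀u₀, ‖u₀‖ = 1, D = ddᵀ − Σ,
(u₁, λ₁) satisfying Du₀ + Σu₁ = λ₀u₁ + λ₁u₀ and u₀ᵀu₁ = 0, and M a matrix with
M(Σ − λ₀I) = I − u₀u₀ᵀ and Mu₀ = 0 (the defining properties of the Moore–Penrose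
inverse (Σ − λ₀I)⁺), one has u₁ = −(dᵀu₀) M d.  With d = z − μ this is the influence
function of the leading eigenvector, IF(z,F) = −((z−μ)ᵀu₀)(Σ−λ₀I)⁺(z−μ). -/
theorem eigenvector_perturbation {p : ℕ} (S : Matrix (Fin p) (Fin p) ℝ) (hS : S.IsSymm)
    (lam0 : ℝ) (u₀ : Fin p → ℝ) (hunit : u₀ ⬝ᵥ u₀ = 1)
    (heig : S.mulVec u₀ = lam0 • u₀)
    (d u₁ : Fin p → ℝ) (lam1 : ℝ)
    (hpert : (vecMulVec d d - S).mulVec u₀ + S.mulVec u₁ = lam0 • u₁ + lam1 • u₀)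
    (horth : u₀ ⬝ᵥ u₁ = 0)
    (M : Matrix (Fin p) (Fin p) ℝ)
    (hM1 : M * (S - lam0 • (1 : Matrix (Fin p) (Fin p) ℝ)) = 1 - vecMulVec u₀ u₀)
    (hM2 : M.mulVec u₀ = 0) :
    u₁ = -((d ⬝ᵥ u₀) • M.mulVec d) := by
  have hvec (v w : Fin p → ℝ) : (vecMulVec v v).mulVec w = (v ⬝ᵥ w) • v := by
    ext i
    simp [vecMulVec_mulVec, mul_comm]
  have hshift : (S - lam0 • (1 : Matrix (Fin p) (Fin p) ℝ)).mulVec u₁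
      = (lam0 + lam1) • u₀ - (d ⬝ᵥ u₀) • d := by
    rw [sub_mulVec, hvec, heig] at hpert
    rw [sub_mulVec, smul_mulVec, one_mulVec]
    linear_combination (norm := module) hpert
  calc u₁ = (M * (S - lam0 • (1 : Matrix (Fin p) (Fin p) ℝ))).mulVec u₁ := by
        rw [hM1, sub_mulVec, hvec, horth, one_mulVec, zero_smul, sub_zero]
    _ = -((d ⬝ᵥ u₀) • M.mulVec d) := by
        rw [← mulVec_mulVec, hshift, mulVec_sub, mulVec_smul, mulVec_smul, hM2, smul_zero,
          zero_sub]
end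

section
/- Let Σ be a real symmetric p×p matrix, λ ∈ ℝ and û ∈ ℝ^p a unit vector with Σû = λû. Assume λ is the largest eigenvalue and is simple, i.e. xᵀΣx ≤ λ for every unit vector x, with equality only for x = ±û. Let d ∈ ℝ^p and define f : [0,1) → ℝ by f(ε) = sup{ xᵀ((1−ε)Σ + ε(1−ε)ddᵀ)x : ‖x‖₂ = 1 }, the largest eigenvalue of the ε-contaminated covariance matrix. Then f has a right derivative at ε = 0 equal to (dᵀû)² − λ. (This is the influence function of the largest eigenvalue of the covariance matrix, with d = z − μ.) -/
/-!
For `0 ≤ ε < 1` the objective equals `(1 - ε) (q x + ε ⟪d, x⟫²)` with `q x = xᵀΣx`, so the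
question is the one-sided derivative of a maximum of functions affine in `ε` (Danskin's theorem).
Testing at `û` gives the lower bound `(1 - ε) (λ + ε ⟪d, û⟫²)`. For the upper bound, fix `η > 0`:
on the compact set of unit vectors with `⟪d, x⟫² ≥ ⟪d, û⟫² + η` simplicity of `λ` keeps `q` below
`λ` by a uniform gap, so for small `ε` these vectors cannot compete, while every other unit vector
has objective at most `(1 - ε) (λ + ε (⟪d, û⟫² + η))`. This is `exists_uniform_upper_bound`.
-/

open Matrix RealInnerProductSpace

/-- The upper half of Danskin's theorem, for `b₀ ≥ 0` and `η > 0`: if `q ≤ M` on a compact set `K`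
and `b ≤ b₀` wherever `q = M` on `K`, then `q + ε b ≤ M + ε (b₀ + η)` on `K` for all small
`ε ≥ 0`. -/
lemma exists_uniform_upper_bound {X : Type*} [TopologicalSpace X] {K : Set X}
    (hK : IsCompact K) {q b : X → ℝ} (hq : Continuous q) (hb : Continuous b) {M b₀ η : ℝ}
    (hη : 0 < η) (hb₀ : 0 ≤ b₀) (hM : ∀ x ∈ K, q x ≤ M)
    (hmaximiser : ∀ x ∈ K, q x = M → b x ≤ b₀) :
    ∃ δ > 0, ∀ ε, 0 ≤ ε → ε < δ → ∀ x ∈ K, q x + ε * b x ≤ M + ε * (b₀ + η) := by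
  have hC : IsCompact (K ∩ {x | b₀ + η ≤ b x}) :=
    hK.inter_right (isClosed_le continuous_const hb)
  rcases (K ∩ {x | b₀ + η ≤ b x}).eq_empty_or_nonempty with hempty | hne
  · refine ⟨1, one_pos, fun ε hε _ x hx => ?_⟩
    have hbx : b x ≤ b₀ + η := by
      by_contra! hlt
      exact Set.eq_empty_iff_forall_notMem.mp hempty x ⟨hx, hlt.le⟩
    have := mul_le_mul_of_nonneg_left hbx hε
    linarith [hM x hx]
  · obtain ⟨y, hy, hymax⟩ := hC.exists_isMaxOn hne hq.continuousOn
    obtain ⟨z, hz, hzmax⟩ := hC.exists_isMaxOn hne hb.continuousOn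
    have hgap : q y < M := by
      refine lt_of_le_of_ne (hM y hy.1) fun h => ?_
      have h1 := hmaximiser y hy.1 h
      have h2 : b₀ + η ≤ b y := hy.2
      linarith
    have hBpos : 0 < b z := by
      have h2 : b₀ + η ≤ b z := hz.2
      linarith
    refine ⟨(M - q y) / b z, div_pos (by linarith) hBpos, fun ε hε hεδ x hx => ?_⟩
    by_cases hbx : b₀ + η ≤ b x
    · have h1 : q x ≤ q y := hymax ⟨hx, hbx⟩
      have h2 : b x ≤ b z := hzmax ⟨hx, hbx⟩
      have h3 : ε * b z < M - q y := (lt_div_iff₀ hBpos).mp hεδ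
      have h4 := mul_le_mul_of_nonneg_left h2 hε
      have h5 : 0 ≤ ε * (b₀ + η) := by positivity
      linarith
    · have := mul_le_mul_of_nonneg_left (not_le.mp hbx).le hε
      linarith [hM x hx]

lemma inner_contaminated {p : ℕ} (S : Matrix (Fin p) (Fin p) ℝ)
    (d x : EuclideanSpace ℝ (Fin p)) (ε : ℝ) :
    ⟪x, Matrix.toEuclideanLin
      ((1 - ε) • S + (ε * (1 - ε)) • Matrix.of (fun i j => d i * d j)) x⟫ =
      (1 - ε) * (⟪x, Matrix.toEuclideanLin S x⟫ + ε * ⟪d, x⟫ ^ 2) := by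
  have hrank_one : Matrix.toEuclideanLin (Matrix.of (fun i j => d i * d j)) x = ⟪d, x⟫ • d := by
    ext i
    simp only [Matrix.toLpLin_apply, Matrix.mulVec, dotProduct, Matrix.of_apply, PiLp.smul_apply,
      PiLp.inner_apply, smul_eq_mul, Finset.sum_mul, RCLike.inner_apply, conj_trivial]
    exact Finset.sum_congr rfl fun j _ => by ring
  rw [map_add, map_smul, map_smul, LinearMap.add_apply, LinearMap.smul_apply,
    LinearMap.smul_apply, hrank_one, inner_add_right, inner_smul_right, inner_smul_right,
    inner_smul_right, real_inner_comm d x]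
  ring

/-- The largest eigenvalue ε ↦ sup_{‖x‖=1} xᵀ((1−ε)Σ + ε(1−ε)ddᵀ)x of the
ε-contaminated covariance matrix has right derivative (dᵀû)² − λ at ε = 0, where λ is the
largest (and simple) eigenvalue of Σ with unit eigenvector û.  This is the influence
function of the largest eigenvalue, with d = z − μ. -/
theorem rightDeriv_largest_eigenvalue_contaminated {p : ℕ}
    (S : Matrix (Fin p) (Fin p) ℝ) (hS : S.IsSymm)
    (lam : ℝ) (uhat : EuclideanSpace ℝ (Fin p)) (huhat : ‖uhat‖ = 1)
    (heig : Matrix.toEuclideanLin S uhat = lam • uhat)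
    (hmax : ∀ x : EuclideanSpace ℝ (Fin p), ‖x‖ = 1 →
      ⟪x, Matrix.toEuclideanLin S x⟫ ≤ lam)
    (hsimple : ∀ x : EuclideanSpace ℝ (Fin p), ‖x‖ = 1 →
      ⟪x, Matrix.toEuclideanLin S x⟫ = lam → x = uhat ∨ x = -uhat)
    (d : EuclideanSpace ℝ (Fin p)) :
    HasDerivWithinAt
      (fun ε : ℝ =>
        sSup { r : ℝ | ∃ x : EuclideanSpace ℝ (Fin p), ‖x‖ = 1 ∧
          ⟪x, Matrix.toEuclideanLin
              ((1 - ε) • S + (ε * (1 - ε)) • Matrix.of (fun i j => d i * d j)) x⟫ = r })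
      (⟪d, uhat⟫ ^ 2 - lam) (Set.Ici 0) 0 := by
  have hlin : Continuous (Matrix.toEuclideanLin S) := LinearMap.continuous_of_finiteDimensional _
  have hq : Continuous fun x : EuclideanSpace ℝ (Fin p) => ⟪x, Matrix.toEuclideanLin S x⟫ :=
    continuous_id.inner hlin
  have hb : Continuous fun x : EuclideanSpace ℝ (Fin p) => ⟪d, x⟫ ^ 2 :=
    (continuous_const.inner continuous_id).pow 2
  have hqu : ⟪uhat, Matrix.toEuclideanLin S uhat⟫ = lam := by
    rw [heig, inner_smul_right, real_inner_self_eq_norm_sq, huhat]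
    ring
  have hb₀ : 0 ≤ ⟪d, uhat⟫ ^ 2 := sq_nonneg _
  simp only [inner_contaminated]
  set b₀ := ⟪d, uhat⟫ ^ 2 with hb₀_def
  set f : ℝ → ℝ := fun ε => sSup { r : ℝ | ∃ x : EuclideanSpace ℝ (Fin p), ‖x‖ = 1 ∧
    (1 - ε) * (⟪x, Matrix.toEuclideanLin S x⟫ + ε * ⟪d, x⟫ ^ 2) = r } with hf
  have hbounds : ∀ η > 0, ∃ δ > 0, ∀ ε, 0 ≤ ε → ε < δ → ε < 1 →
      (1 - ε) * (lam + ε * b₀) ≤ f ε ∧ f ε ≤ (1 - ε) * (lam + ε * (b₀ + η)) := by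
    intro η hη
    obtain ⟨δ, hδ, hupper⟩ := exists_uniform_upper_bound
      (isCompact_sphere (0 : EuclideanSpace ℝ (Fin p)) 1) hq hb hη hb₀
      (fun x hx => hmax x (by simpa using hx))
      (fun x hx hxq => by
        rcases hsimple x (by simpa using hx) hxq with rfl | rfl
        · exact le_rfl
        · simp [hb₀_def])
    refine ⟨δ, hδ, fun ε hε hεδ hε1 => ?_⟩
    have hub : ∀ r ∈ { r : ℝ | ∃ x : EuclideanSpace ℝ (Fin p), ‖x‖ = 1 ∧
        (1 - ε) * (⟪x, Matrix.toEuclideanLin S x⟫ + ε * ⟪d, x⟫ ^ 2) = r },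
        r ≤ (1 - ε) * (lam + ε * (b₀ + η)) := by
      rintro r ⟨x, hx, rfl⟩
      exact mul_le_mul_of_nonneg_left (hupper ε hε hεδ x (by simpa using hx)) (by linarith)
    exact ⟨le_csSup ⟨_, hub⟩ ⟨uhat, huhat, by rw [hqu]⟩, csSup_le ⟨_, uhat, huhat, rfl⟩ hub⟩
  have hf0 : f 0 = lam := by
    obtain ⟨δ, hδ, h⟩ := hbounds 1 one_pos
    obtain ⟨h1, h2⟩ := h 0 le_rfl hδ one_pos
    simp only [sub_zero, zero_mul, add_zero, one_mul] at h1 h2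
    exact le_antisymm h2 h1
  rw [hasDerivWithinAt_iff_isLittleO, Asymptotics.isLittleO_iff]
  intro η hη
  obtain ⟨δ, hδ, h⟩ := hbounds η hη
  have hb1 : 0 < b₀ + 1 := by linarith
  -- `ε < η / (b₀ + 1)` absorbs the quadratic term `ε² b₀` left over from the factor `1 - ε`.
  have hδ' : 0 < min (min δ 1) (η / (b₀ + 1)) := by positivity
  filter_upwards [self_mem_nhdsWithin, mem_nhdsWithin_of_mem_nhds (Iio_mem_nhds hδ')]
    with ε hε hεlt
  have hε0 : 0 ≤ ε := hε
  obtain ⟨hεlt, hεη⟩ := lt_min_iff.mp (Set.mem_Iio.mp hεlt)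
  obtain ⟨hεδ, hε1⟩ := lt_min_iff.mp hεlt
  obtain ⟨h1, h2⟩ := h ε hε0 hεδ hε1
  have h3 : ε * (b₀ + 1) < η := (lt_div_iff₀ hb1).mp hεη
  rw [hf0, sub_zero, smul_eq_mul, Real.norm_eq_abs, Real.norm_eq_abs, abs_of_nonneg hε0, abs_le]
  have h4 : ε * (ε * b₀) ≤ ε * η := mul_le_mul_of_nonneg_left (by linarith) hε0
  have h5 : 0 ≤ ε * (ε * b₀) := by positivity
  have h6 : 0 ≤ ε * (ε * η) := by positivity
  constructor <;> linarith
end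

section
/- Let σ > 0, m ∈ ℝ, let û, z ∈ ℝ^p with ‖û‖₂ = 1 and s := ⟨z, û⟩ ≠ 0, and let w_μ, w_σ ∈ ℝ^p be fixed vectors. Define, for α ∈ ℝ, the vector b(α) = g_c(αs)·(αz) + g_μ(αs)·w_μ + g_σ(αs)·w_σ, where g_c(c) = −2(c − m)/(σ² + (c − m)²), g_μ(c) = 2(c − m)/(σ² + (c − m)²), g_σ(c) = 1/σ − 2σ/(σ² + (c − m)²). Then b is bounded: there exists K such that ‖b(α)‖₂ ≤ K for all α ≥ 0. Hence the influence function of the leading Cauchy principal direction is bounded along any outlier direction z not orthogonal to û. -/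
/-!
Write `c = α s - m` with `s = ⟪z, û⟫`. By AM-GM, `|2c / (σ² + c²)| ≤ 1/σ`, and the scale score
lies in `[-1/σ, 1/σ]`, so the last two summands are bounded. The first one carries the extra factor
`α = (c + m)/s`, available because `s ≠ 0`; then `2c(c + m)/(σ² + c²)` is at most `2 + |m|/σ` in
absolute value, since the redescending location score compensates the linear growth of `α`.
-/

open RealInnerProductSpace

lemma abs_location_score_le {σ : ℝ} (hσ : 0 < σ) (c : ℝ) :
    |2 * c / (σ ^ 2 + c ^ 2)| ≤ 1 / σ := by
  have hD : 0 < σ ^ 2 + c ^ 2 := by positivity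
  rw [abs_div, abs_of_pos hD, div_le_div_iff₀ hD hσ, abs_mul, abs_two, ← sq_abs c]
  nlinarith [sq_nonneg (σ - |c|)]

lemma abs_scale_score_le {σ : ℝ} (hσ : 0 < σ) (c : ℝ) :
    |1 / σ - 2 * σ / (σ ^ 2 + c ^ 2)| ≤ 1 / σ := by
  have hD : 0 < σ ^ 2 + c ^ 2 := by positivity
  have h0 : 0 ≤ 2 * σ / (σ ^ 2 + c ^ 2) := by positivity
  have h1 : 2 * σ / (σ ^ 2 + c ^ 2) ≤ 2 / σ := by
    rw [div_le_div_iff₀ hD hσ]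
    nlinarith [sq_nonneg c]
  have h2 : 2 / σ = 1 / σ + 1 / σ := by ring
  rw [abs_le]
  constructor <;> linarith

/-- The score times the outlier scale `α` stays bounded: `α = (c + m) / s` for `c = α s - m`. -/
lemma abs_direction_score_mul_le {σ : ℝ} (hσ : 0 < σ) (m : ℝ) {s : ℝ} (hs : s ≠ 0) (α : ℝ) :
    |-2 * (α * s - m) / (σ ^ 2 + (α * s - m) ^ 2) * α| ≤ (2 + 1 / σ * |m|) / |s| := by
  rw [le_div_iff₀ (abs_pos.mpr hs), ← abs_mul]
  set c := α * s - m with hc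
  have hD : 0 < σ ^ 2 + c ^ 2 := by positivity
  have hαs : α * s = c + m := by rw [hc]; ring
  have e : -2 * c / (σ ^ 2 + c ^ 2) * α * s
      = -(2 * c ^ 2 / (σ ^ 2 + c ^ 2) + 2 * c / (σ ^ 2 + c ^ 2) * m) := by
    rw [mul_assoc, hαs]
    ring
  have h1 : |2 * c ^ 2 / (σ ^ 2 + c ^ 2)| ≤ 2 := by
    rw [abs_of_nonneg (by positivity), div_le_iff₀ hD]
    nlinarith [sq_nonneg σ]
  have h2 : |2 * c / (σ ^ 2 + c ^ 2) * m| ≤ 1 / σ * |m| := by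
    rw [abs_mul]
    exact mul_le_mul_of_nonneg_right (abs_location_score_le hσ c) (abs_nonneg m)
  rw [e, abs_neg]
  exact (abs_add_le _ _).trans (add_le_add h1 h2)

/-- Boundedness of b(α) = g_c(αs)·(αz) + g_μ(αs)·w_μ + g_σ(αs)·w_σ along scaled outliers
αz with s = ⟨z, û⟩ ≠ 0, where g_c, g_μ, g_σ are the Cauchy score functions with location m
and scale σ > 0.  Hence the influence function of the leading Cauchy principal direction is
bounded along any outlier direction z not orthogonal to û. -/
theorem cauchy_IF_bounded_nonorthogonal {p : ℕ} (σ m : ℝ) (hσ : 0 < σ)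
    (uhat z : EuclideanSpace ℝ (Fin p)) (huhat : ‖uhat‖ = 1)
    (hs : ⟪z, uhat⟫ ≠ 0) (wμ wσ : EuclideanSpace ℝ (Fin p)) :
    ∃ K : ℝ, ∀ α : ℝ, 0 ≤ α →
      ‖(-2 * (α * ⟪z, uhat⟫ - m) / (σ ^ 2 + (α * ⟪z, uhat⟫ - m) ^ 2)) • (α • z)
        + (2 * (α * ⟪z, uhat⟫ - m) / (σ ^ 2 + (α * ⟪z, uhat⟫ - m) ^ 2)) • wμ
        + (1 / σ - 2 * σ / (σ ^ 2 + (α * ⟪z, uhat⟫ - m) ^ 2)) • wσ‖ ≤ K := by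
  refine ⟨(2 + 1 / σ * |m|) / |⟪z, uhat⟫| * ‖z‖ + 1 / σ * ‖wμ‖ + 1 / σ * ‖wσ‖, fun α _ => ?_⟩
  refine (norm_add₃_le).trans ?_
  rw [smul_smul, norm_smul, norm_smul, norm_smul, Real.norm_eq_abs, Real.norm_eq_abs,
    Real.norm_eq_abs]
  gcongr
  · exact abs_direction_score_mul_le hσ m hs α
  · exact abs_location_score_le hσ _
  · exact abs_scale_score_le hσ _
end
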